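/- Let (W, ρ_W) be an irreducible complex representation of S_N and suppose k ≠ 0. If ρ_W extends to a representation ρ of H_{1,k,c}(Γ_N) on the space W (i.e., a representation whose restriction to S_N ⊂ Γ_N equals ρ_W), then there is a character χ: Γ → ℂ^× such that ρ(γ_i) = χ(γ)·Id_W for all γ ∈ Γ and all i, ρ(x_i) = ρ(y_i) = 0 for all i, and ρ_W(s_{12} + s_{13} + ⋯ + s_{1N}) = −(2/(k·|Γ|))·(1 + Σ_{γ∈Γ∖{1}} c_γ χ(γ)) · Id_W; in particular the sum of transpositions s_{12} + ⋯ + s_{1N} acts on W by a scalar. -/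

import Mathlib

noncomputable section

/-- `SL(2,ℂ)`. -/
abbrev SL2 : Type := Matrix.SpecialLinearGroup (Fin 2) ℂ

/-- The permutation action of `S_N` on `Γ^N`, `(σ • f) i = f (σ⁻¹ i)`. -/
def wphi (Γ : Type) [Group Γ] (N : ℕ) : Equiv.Perm (Fin N) →* MulAut (Fin N → Γ) where
  toFun σ := MulEquiv.arrowCongr σ (MulEquiv.refl Γ)
  map_one' := rfl
  map_mul' _ _ := rfl

/-- The wreath product `Γ_N = S_N ⋉ Γ^N`. -/
abbrev WP (Γ : Type) [Group Γ] (N : ℕ) : Type :=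
  (Fin N → Γ) ⋊[wphi Γ N] Equiv.Perm (Fin N)

/-- `γ_i`: the element `γ ∈ Γ` placed in the `i`-th factor of `Γ^N ⊂ Γ_N`. -/
def tG {Γ : Type} [Group Γ] {N : ℕ} (i : Fin N) (γ : Γ) : WP Γ N :=
  SemidirectProduct.inl (Pi.mulSingle i γ)

/-- The symplectic reflection `s_{ij} γ_i γ_j⁻¹` of type (S). -/
def tS {Γ : Type} [Group Γ] {N : ℕ} (i j : Fin N) (γ : Γ) : WP Γ N :=
  SemidirectProduct.inr (Equiv.swap i j) * tG i γ * (tG j γ)⁻¹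

/-- The linear action of the wreath product `Γ_N` (for `Γ ⊂ SL(2,ℂ)`) on `V = L^{⊕N}`,
`(g · v) i = g.left i • v (g.right⁻¹ i)`. -/
def actL (Γ : Subgroup SL2) (N : ℕ) (g : WP Γ N) :
    (Fin N → Fin 2 → ℂ) →ₗ[ℂ] Fin N → Fin 2 → ℂ :=
  LinearMap.pi fun i =>
    (Matrix.mulVecLin ((g.left i : SL2) : Matrix (Fin 2) (Fin 2) ℂ)).comp
      (LinearMap.proj (g.right⁻¹ i))

noncomputable section

variable (Γ : Subgroup SL2) [Fintype Γ] [DecidableEq Γ] (N : ℕ)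

/-- Generator `g ∈ Γ_N` in the free algebra on `Γ_N ⊕ {x_i, y_i}`. -/
def nG (g : WP Γ N) : FreeAlgebra ℂ (WP Γ N ⊕ Fin N × Fin 2) :=
  FreeAlgebra.ι ℂ (Sum.inl g)

/-- Generator `x_i` (for `p = 0`) resp. `y_i` (for `p = 1`) in the free algebra. -/
def nX (i : Fin N) (p : Fin 2) : FreeAlgebra ℂ (WP Γ N ⊕ Fin N × Fin 2) :=
  FreeAlgebra.ι ℂ (Sum.inr (i, p))

/-- The general vector `v ∈ V = L^{⊕N}` inside the free algebra. -/
def nV (v : Fin N → Fin 2 → ℂ) : FreeAlgebra ℂ (WP Γ N ⊕ Fin N × Fin 2) :=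
  ∑ i : Fin N, ∑ p : Fin 2, v i p • nX Γ N i p

/-- The standard symplectic form `ω_L` on `L = ℂ²`: `ω_L(u,v) = u₀ v₁ - u₁ v₀`. -/
def omL (u v : Fin 2 → ℂ) : ℂ := u 0 * v 1 - u 1 * v 0

/-- The defining relations of the wreath product symplectic reflection algebra
`H_{1,k,c}(Γ_N)`:  the group relations of `Γ_N`, the relations `g v g⁻¹ = g(v)` for
`v ∈ V`, and the relations (R1), (R2) of Gan–Ginzburg. -/
inductive HRel (k : ℂ) (c : Γ → ℂ) :
    FreeAlgebra ℂ (WP Γ N ⊕ Fin N × Fin 2) → FreeAlgebra ℂ (WP Γ N ⊕ Fin N × Fin 2) → Prop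
  | grp_mul (g h : WP Γ N) : HRel k c (nG Γ N g * nG Γ N h) (nG Γ N (g * h))
  | grp_one : HRel k c (nG Γ N 1) 1
  | grp_conj (g : WP Γ N) (v : Fin N → Fin 2 → ℂ) :
      HRel k c (nG Γ N g * nV Γ N v * nG Γ N g⁻¹) (nV Γ N (actL Γ N g v))
  | r1 (i : Fin N) :
      HRel k c (nX Γ N i 0 * nX Γ N i 1 - nX Γ N i 1 * nX Γ N i 0)
        (1 + (k / 2) • ∑ j ∈ Finset.univ.filter (fun j : Fin N => j ≠ i),
            ∑ γ : Γ, nG Γ N (tS i j γ)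
          + ∑ γ ∈ Finset.univ.filter (fun γ : Γ => γ ≠ 1), c γ • nG Γ N (tG i γ))
  | r2 (i j : Fin N) (hij : i ≠ j) (u v : Fin 2 → ℂ) :
      HRel k c (nV Γ N (Pi.single i u) * nV Γ N (Pi.single j v)
          - nV Γ N (Pi.single j v) * nV Γ N (Pi.single i u))
        ((-(k / 2)) • ∑ γ : Γ,
          omL (Matrix.mulVec ((γ : SL2) : Matrix (Fin 2) (Fin 2) ℂ) u) v • nG Γ N (tS i j γ))

/-- The wreath product symplectic reflection algebra `H_{1,k,c}(Γ_N)`. -/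
abbrev HN (k : ℂ) (c : Γ → ℂ) : Type := RingQuot (HRel Γ N k c)

/-- The image of the group element `g ∈ Γ_N` in `H_{1,k,c}(Γ_N)`. -/
def hG (k : ℂ) (c : Γ → ℂ) (g : WP Γ N) : HN Γ N k c :=
  RingQuot.mkAlgHom ℂ (HRel Γ N k c) (nG Γ N g)

/-- The image of `x_i` (`p = 0`) resp. `y_i` (`p = 1`) in `H_{1,k,c}(Γ_N)`. -/
def hX (k : ℂ) (c : Γ → ℂ) (i : Fin N) (p : Fin 2) : HN Γ N k c :=
  RingQuot.mkAlgHom ℂ (HRel Γ N k c) (nX Γ N i p)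

end

theorem aux_unip {A : Type*} [Ring A] [Algebra ℂ A] (u : A) (m : ℕ) (hm : m ≠ 0)
    (h1 : u ^ m = 1) (h2 : (u - 1) * (u - 1) = 0) : u = 1 := by
  have key : ∀ n : ℕ, u ^ n = 1 + (n : ℂ) • (u - 1) := by
    intro n
    induction n with
    | zero => simp
    | succ n ih =>
      have hu : u = 1 + (u - 1) := by abel
      rw [pow_succ, ih]
      nth_rewrite 2 [hu]
      rw [mul_add, mul_one, add_mul, one_mul, smul_mul_assoc, h2, smul_zero, add_zero]
      push_cast
      rw [add_smul, one_smul, add_assoc]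
  have h := key m
  rw [h1] at h
  have h3 : (m : ℂ) • (u - 1) = 0 := by
    have := h.symm
    simpa using this
  rcases smul_eq_zero.mp h3 with h4 | h4
  · exact absurd (by exact_mod_cast h4) hm
  · exact sub_eq_zero.mp h4

theorem aux_schur {G W : Type*} [Group G] [AddCommGroup W] [Module ℂ W]
    [FiniteDimensional ℂ W] [Nontrivial W] (ρW : Representation ℂ G W)
    (hirr : ∀ U : Submodule ℂ W, (∀ σ : G, U.map (ρW σ) ≤ U) → U = ⊥ ∨ U = ⊤)
    (T : Module.End ℂ W) (hT : ∀ σ, ρW σ * T = T * ρW σ) :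
    ∃ μ : ℂ, T = μ • LinearMap.id := by
  obtain ⟨μ, hμ⟩ := Module.End.exists_eigenvalue T
  refine ⟨μ, ?_⟩
  have hU := hirr (Module.End.eigenspace T μ) (by
    intro σ
    rintro _ ⟨w, hw, rfl⟩
    have hw' : T w = μ • w := Module.End.mem_eigenspace_iff.mp hw
    rw [Module.End.mem_eigenspace_iff]
    have := congrArg (fun f : Module.End ℂ W => f w) (hT σ)
    simp only [Module.End.mul_apply] at this
    rw [← this, hw', map_smul])
  rcases hU with h | h
  · exact absurd h hμ
  · ext w
    have : w ∈ Module.End.eigenspace T μ := by rw [h]; trivial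
    simpa using Module.End.mem_eigenspace_iff.mp this

theorem aux_conj {Γ : Type} [Group Γ] {N : ℕ} (σ : Equiv.Perm (Fin N)) (i : Fin N) (γ : Γ) :
    (SemidirectProduct.inr σ : WP Γ N) * tG i γ = tG (σ i) γ * SemidirectProduct.inr σ := by
  unfold tG
  ext1
  · simp only [SemidirectProduct.mul_left, SemidirectProduct.left_inr,
      SemidirectProduct.right_inr, SemidirectProduct.left_inl, SemidirectProduct.right_inl,
      one_mul, map_one, mul_one]
    funext l
    change (Pi.mulSingle i γ : Fin N → Γ) (σ.symm l) = (Pi.mulSingle (σ i) γ : Fin N → Γ) l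
    by_cases h : l = σ i
    · subst h; simp
    · rw [Pi.mulSingle_eq_of_ne h, Pi.mulSingle_eq_of_ne]
      intro h'
      exact h (by rw [← h']; simp)
  · simp

theorem aux_comm {Γ : Type} [Group Γ] {N : ℕ} {i j : Fin N} (h : i ≠ j) (γ δ : Γ) :
    (tG i γ : WP Γ N) * tG j δ = tG j δ * tG i γ := by
  unfold tG
  rw [← map_mul, ← map_mul, (Pi.mulSingle_commute (f := fun _ : Fin N => Γ) h γ δ).eq]

theorem aux_mul {Γ : Type} [Group Γ] {N : ℕ} (i : Fin N) (γ δ : Γ) :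
    (tG i (γ * δ) : WP Γ N) = tG i γ * tG i δ := by
  unfold tG
  rw [← map_mul, Pi.mulSingle_mul]

theorem aux_one {Γ : Type} [Group Γ] {N : ℕ} (i : Fin N) :
    (tG i (1 : Γ) : WP Γ N) = 1 := by
  unfold tG
  simp

/-- Group part: a representation of the wreath product irreducible over `S_N`. -/
theorem aux_group {Γ : Type} [Group Γ] [Finite Γ] {N : ℕ}
    {W : Type} [AddCommGroup W] [Module ℂ W] [FiniteDimensional ℂ W] [Nontrivial W]
    (R : WP Γ N →* Module.End ℂ W)
    (ρW : Representation ℂ (Equiv.Perm (Fin N)) W)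
    (hirr : ∀ U : Submodule ℂ W,
      (∀ σ : Equiv.Perm (Fin N), U.map (ρW σ) ≤ U) → U = ⊥ ∨ U = ⊤)
    (hres : ∀ σ : Equiv.Perm (Fin N), R (SemidirectProduct.inr σ) = ρW σ)
    (γ : Γ) (i j : Fin N) : R (tG i γ) = R (tG j γ) := by
  classical
  by_cases hij : i = j
  · rw [hij]
  have hconj : ∀ (σ : Equiv.Perm (Fin N)) (l : Fin N),
      ρW σ * R (tG l γ) = R (tG (σ l) γ) * ρW σ := by
    intro σ l
    rw [← hres, ← map_mul, ← map_mul, aux_conj]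
  set a := R (tG i γ) with ha
  set b := R (tG j γ) with hb
  have hab : a * b = b * a := by
    rw [ha, hb, ← map_mul, ← map_mul, aux_comm hij]
  -- the sum of transpositions is a scalar
  obtain ⟨μ, hμ⟩ := aux_schur ρW hirr (∑ p : Fin N, ∑ q : Fin N, ρW (Equiv.swap p q)) (by
    intro σ
    rw [Finset.mul_sum, Finset.sum_mul, ← Equiv.sum_comp σ (fun p => _ * ρW σ)]
    refine Finset.sum_congr rfl fun p _ => ?_
    rw [Finset.mul_sum, ← Equiv.sum_comp σ (fun q => ρW (Equiv.swap (σ p) q)), Finset.sum_mul]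
    refine Finset.sum_congr rfl fun q _ => ?_
    rw [← map_mul, ← map_mul, Equiv.mul_swap_eq_swap_mul])
  let D : Module.End ℂ W →ₗ[ℂ] Module.End ℂ W :=
    { toFun := fun s => b * (a * s - s * a) - (a * s - s * a) * b
      map_add' := by intro s t; noncomm_ring
      map_smul' := by
        intro r s
        simp only [mul_smul_comm, smul_mul_assoc, ← smul_sub, RingHom.id_apply] }
  have hD : ∀ s, D s = b * (a * s - s * a) - (a * s - s * a) * b := fun s => rfl
  have hD0 : D (∑ p : Fin N, ∑ q : Fin N, ρW (Equiv.swap p q)) = 0 := by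
    rw [hμ, hD]
    have : a * (μ • LinearMap.id) - (μ • LinearMap.id) * a = 0 := by
      ext w; simp
    rw [this]; simp
  have hDa : ∀ s, a * s = s * a → D s = 0 := by
    intro s hs
    rw [hD, hs]; simp
  have hDb : ∀ s, b * s = s * b → D s = 0 := by
    intro s hs
    rw [hD, mul_sub, sub_mul]
    have e1 : b * (a * s) = a * s * b := by
      rw [← mul_assoc, ← hab, mul_assoc, hs, mul_assoc]
    have e2 : b * (s * a) = s * a * b := by
      rw [← mul_assoc, hs, mul_assoc, ← hab, mul_assoc]
    rw [e1, e2, sub_self]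
  have hzero : ∀ p q : Fin N, ¬ ((p = i ∧ q = j) ∨ (p = j ∧ q = i)) →
      D (ρW (Equiv.swap p q)) = 0 := by
    intro p q h
    by_cases h1 : Equiv.swap p q i = i
    · apply hDa
      have := hconj (Equiv.swap p q) i
      rw [h1] at this
      exact this.symm
    · apply hDb
      have h2 : Equiv.swap p q j = j := by
        by_contra h2
        rw [← ne_eq, Equiv.swap_apply_ne_self_iff] at h1 h2
        grind
      have := hconj (Equiv.swap p q) j
      rw [h2] at this
      exact this.symm
  have hsum : D (∑ p : Fin N, ∑ q : Fin N, ρW (Equiv.swap p q)) =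
      D (ρW (Equiv.swap i j)) + D (ρW (Equiv.swap i j)) := by
    simp only [map_sum]
    rw [Fintype.sum_eq_add i j hij, Fintype.sum_eq_single j, Fintype.sum_eq_single i,
      Equiv.swap_comm j i]
    · intro q hq; apply hzero; grind
    · intro q hq; apply hzero; grind
    · rintro p ⟨h1, h2⟩
      refine Finset.sum_eq_zero fun q _ => hzero p q (by grind)
  have hs0 : D (ρW (Equiv.swap i j)) = 0 := by
    rw [hsum, ← two_smul ℂ] at hD0
    exact (smul_eq_zero.mp hD0).resolve_left two_ne_zero
  set s := ρW (Equiv.swap i j) with hs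
  have hsa : s * a = b * s := by
    have := hconj (Equiv.swap i j) i
    rwa [Equiv.swap_apply_left] at this
  have hsb : s * b = a * s := by
    have := hconj (Equiv.swap i j) j
    rwa [Equiv.swap_apply_right] at this
  have hss : s * s = 1 := by
    rw [hs, ← map_mul, Equiv.swap_mul_self, map_one]
  have h2 : (b - a) * (b - a) = 0 := by
    have h3 : D s = - ((b - a) * (b - a)) * s := by
      rw [hD, hsa]
      have e1 : a * s * b = a * a * s := by rw [mul_assoc, hsb, mul_assoc]
      have e2 : b * s * b = b * a * s := by rw [mul_assoc, hsb, mul_assoc]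
      rw [mul_sub, sub_mul, e1, e2]
      have e3 : (b - a) * (b - a) = b * b - b * a - b * a + a * a := by
        rw [mul_sub, sub_mul, sub_mul, hab]; abel
      rw [e3]
      noncomm_ring
    have h4 := congrArg (fun z => z * s) (h3.symm.trans hs0)
    simp only [mul_assoc, hss, zero_mul, mul_one, neg_mul] at h4
    simpa using h4
  -- the unipotent element
  set b' := R (tG j γ⁻¹) with hb'
  have hbb : b * b' = 1 := by
    rw [hb, hb', ← map_mul, ← aux_mul, mul_inv_cancel, aux_one, map_one]
  have hbb2 : b' * b = 1 := by
    rw [hb, hb', ← map_mul, ← aux_mul, inv_mul_cancel, aux_one, map_one]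
  have hab' : a * b' = b' * a := by
    rw [ha, hb', ← map_mul, ← map_mul, aux_comm hij]
  have hpow : ∀ (l : Fin N) (δ : Γ) (n : ℕ), R (tG l δ) ^ n = R (tG l (δ ^ n)) := by
    intro l δ n
    induction n with
    | zero => simp [aux_one]
    | succ n ih => rw [pow_succ, pow_succ, ih, aux_mul, map_mul]
  have hu := aux_unip (a * b') (Nat.card Γ) Nat.card_pos.ne' (by
    rw [Commute.mul_pow hab', ha, hb', hpow, hpow, pow_card_eq_one', pow_card_eq_one', aux_one,
      aux_one, map_one, mul_one]) (by
    have e : a * b' - 1 = - ((b - a) * b') := by rw [sub_mul, hbb]; abel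
    have c1 : b' * (b - a) = (b - a) * b' := by rw [mul_sub, sub_mul, hbb, hbb2, hab']
    rw [e, neg_mul_neg, mul_assoc, ← mul_assoc b', c1, mul_assoc, ← mul_assoc, h2, zero_mul])
  calc a = a * (b' * b) := by rw [hbb2, mul_one]
    _ = b := by rw [← mul_assoc, hu, one_mul]

theorem aux_sl2 (g : SL2) (m : ℕ) (hm : m ≠ 0) (hg : g ^ m = 1) (h1 : g ≠ 1) :
    ((g : Matrix (Fin 2) (Fin 2) ℂ) - 1).det ≠ 0 := by
  intro h
  apply h1
  apply Subtype.ext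
  change (g : Matrix (Fin 2) (Fin 2) ℂ) = 1
  apply aux_unip _ m hm
  · have := congrArg (fun z : SL2 => (z : Matrix (Fin 2) (Fin 2) ℂ)) hg
    simpa using this
  · have hd := g.det_coe
    rw [Matrix.det_fin_two] at h hd
    simp at h
    ext p q
    fin_cases p <;> fin_cases q <;> simp [Matrix.mul_apply, Fin.sum_univ_two] <;> grind

/-- let `(W, ρ_W)` be an irreducible complex representation of `S_N` and
`k ≠ 0`.  If `ρ_W` extends to a representation `ρ` of `H_{1,k,c}(Γ_N)` on `W`, then
there is a character `χ : Γ → ℂˣ` such that `ρ(γ_i) = χ(γ)·Id` for all `γ, i`,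
`ρ(x_i) = ρ(y_i) = 0` for all `i`, and
`ρ_W(s_{12} + ⋯ + s_{1N}) = -(2/(k|Γ|))(1 + ∑_{γ≠1} c_γ χ(γ)) · Id`; in particular the
sum of transpositions `s_{12} + ⋯ + s_{1N}` acts on `W` by a scalar. -/
theorem stmt_5 (Γ : Subgroup SL2) [Fintype Γ] [DecidableEq Γ] (N : ℕ) (hN : 0 < N)
    (k : ℂ) (hk : k ≠ 0) (c : Γ → ℂ) (hc : ∀ γ δ : Γ, c (δ * γ * δ⁻¹) = c γ)
    (W : Type) [AddCommGroup W] [Module ℂ W] [FiniteDimensional ℂ W] [Nontrivial W]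
    (ρW : Representation ℂ (Equiv.Perm (Fin N)) W)
    (hirr : ∀ U : Submodule ℂ W,
      (∀ σ : Equiv.Perm (Fin N), U.map (ρW σ) ≤ U) → U = ⊥ ∨ U = ⊤)
    (ρ : HN Γ N k c →ₐ[ℂ] Module.End ℂ W)
    (hres : ∀ σ : Equiv.Perm (Fin N), ρ (hG Γ N k c (SemidirectProduct.inr σ)) = ρW σ) :
    ∃ χ : Γ →* ℂˣ,
      (∀ (γ : Γ) (i : Fin N), ρ (hG Γ N k c (tG i γ)) = (χ γ : ℂ) • LinearMap.id) ∧
      (∀ (i : Fin N) (p : Fin 2), ρ (hX Γ N k c i p) = 0) ∧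
      (∑ j ∈ Finset.univ.filter (fun j : Fin N => j ≠ (⟨0, hN⟩ : Fin N)),
          ρW (Equiv.swap ⟨0, hN⟩ j) =
        (-(2 / (k * (Fintype.card Γ : ℂ))) *
          (1 + ∑ γ ∈ Finset.univ.filter (fun γ : Γ => γ ≠ 1), c γ * (χ γ : ℂ))) •
          LinearMap.id) := by
  classical
  let R : WP Γ N →* Module.End ℂ W :=
    { toFun := fun g => ρ (hG Γ N k c g)
      map_one' := by
        rw [show hG Γ N k c 1 = 1 from ?_, map_one]
        unfold hG
        rw [RingQuot.mkAlgHom_rel ℂ (HRel.grp_one), map_one]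
      map_mul' := by
        intro g h
        rw [← map_mul]
        congr 1
        unfold hG
        rw [← map_mul, RingQuot.mkAlgHom_rel ℂ (HRel.grp_mul g h)] }
  have hR : ∀ g, ρ (hG Γ N k c g) = R g := fun g => rfl
  have hRG : ∀ g, ρ (RingQuot.mkAlgHom ℂ (HRel Γ N k c) (nG Γ N g)) = R g := fun g => rfl
  have hRX : ∀ i p, ρ (RingQuot.mkAlgHom ℂ (HRel Γ N k c) (nX Γ N i p)) = ρ (hX Γ N k c i p) :=
    fun i p => rfl
  have heq := aux_group R ρW hirr hres
  let i0 : Fin N := ⟨0, hN⟩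
  have hsc : ∀ γ : Γ, ∃ μ : ℂ, R (tG i0 γ) = μ • LinearMap.id := by
    intro γ
    apply aux_schur ρW hirr
    intro σ
    rw [← hres, hR, ← map_mul, aux_conj, map_mul, heq γ _ i0]
  choose f hf using hsc
  have hidinj : ∀ a b : ℂ, a • (LinearMap.id : W →ₗ[ℂ] W) = b • LinearMap.id → a = b := by
    intro a b h
    obtain ⟨w, hw⟩ := exists_ne (0 : W)
    have := congrArg (fun T : W →ₗ[ℂ] W => T w) h
    simp only [LinearMap.smul_apply, LinearMap.id_apply] at this
    exact smul_left_injective ℂ hw this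
  let F : Γ →* ℂ :=
    { toFun := f
      map_one' := by
        apply hidinj
        rw [← hf, aux_one, map_one, one_smul]; rfl
      map_mul' := by
        intro γ δ
        apply hidinj
        rw [← hf, aux_mul, map_mul, hf, hf]
        ext w
        simp [mul_smul]
        rw [smul_comm] }
  let χ : Γ →* ℂˣ := F.toHomUnits
  have hχ : ∀ γ, (χ γ : ℂ) = f γ := fun γ => rfl
  have hRt : ∀ γ i, R (tG i γ) = (χ γ : ℂ) • (1 : Module.End ℂ W) := by
    intro γ i
    rw [heq γ i i0, hf, hχ]; rfl
  have hSt : ∀ i j γ, R (tS i j γ) = ρW (Equiv.swap i j) := by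
    intro i j γ
    unfold tS
    have : R (tG i γ) * R ((tG j γ)⁻¹) = 1 := by
      rw [heq γ i j, ← map_mul, mul_inv_cancel, map_one]
    rw [map_mul, map_mul, mul_assoc, this, mul_one, ← hR, hres]
  -- relations
  have hr1 : ∀ i, ρ (hX Γ N k c i 0) * ρ (hX Γ N k c i 1) - ρ (hX Γ N k c i 1) * ρ (hX Γ N k c i 0)
      = 1 + (k / 2) • ∑ j ∈ Finset.univ.filter (fun j : Fin N => j ≠ i),
            (Fintype.card Γ : ℂ) • ρW (Equiv.swap i j)
          + ∑ γ ∈ Finset.univ.filter (fun γ : Γ => γ ≠ 1), (c γ * χ γ) • (1 : Module.End ℂ W) := by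
    intro i
    have := congrArg ρ (RingQuot.mkAlgHom_rel ℂ (HRel.r1 (k := k) (c := c) i))
    simp only [map_sub, map_mul, map_add, map_one, map_smul, map_sum, hRG, hRX, hSt, hRt,
      Finset.sum_const, Finset.card_univ, smul_smul] at this
    rw [this]
    simp only [Nat.cast_smul_eq_nsmul]
  have hV : ∀ i u, ρ (RingQuot.mkAlgHom ℂ (HRel Γ N k c) (nV Γ N (Pi.single i u))) =
      u 0 • ρ (hX Γ N k c i 0) + u 1 • ρ (hX Γ N k c i 1) := by
    intro i u
    unfold nV
    rw [Fintype.sum_eq_single i]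
    · simp [Fin.sum_univ_two, hRX]
    · intro l hl
      simp [Pi.single_eq_of_ne hl]
  have hX0 : ∀ (i : Fin N) (p : Fin 2), ρ (hX Γ N k c i p) = 0 := by
    by_cases htr : ∃ γ : Γ, γ ≠ 1
    · obtain ⟨γ, hγ⟩ := htr
      intro i
      set M : Matrix (Fin 2) (Fin 2) ℂ := ((γ : SL2) : Matrix (Fin 2) (Fin 2) ℂ) with hM
      have hdet : (M - 1).det ≠ 0 := by
        apply aux_sl2 (γ : SL2) (Fintype.card Γ) Fintype.card_ne_zero
        · have := pow_card_eq_one (x := γ)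
          exact_mod_cast congrArg Subtype.val this
        · intro h; exact hγ (Subtype.ext h)
      have hact : ∀ u : Fin 2 → ℂ, actL Γ N (tG i γ) (Pi.single i u) = Pi.single i (M.mulVec u) := by
        intro u
        funext l
        by_cases hl : l = i
        · subst hl
          simp [actL, tG, hM]
        · simp [actL, tG, Pi.single_eq_of_ne hl]
      have hinv : ∀ u : Fin 2 → ℂ,
          u 0 • ρ (hX Γ N k c i 0) + u 1 • ρ (hX Γ N k c i 1) =
          (M.mulVec u) 0 • ρ (hX Γ N k c i 0) + (M.mulVec u) 1 • ρ (hX Γ N k c i 1) := by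
        intro u
        have := congrArg ρ (RingQuot.mkAlgHom_rel ℂ
          (HRel.grp_conj (k := k) (c := c) (tG i γ) (Pi.single i u)))
        rw [hact, map_mul, map_mul, map_mul, map_mul, hV, hV, hRG, hRG, hRt, smul_one_mul,
          ← mul_smul_one, mul_assoc, ← hRt γ i, ← map_mul, mul_inv_cancel, map_one, mul_one] at this
        exact this
      have hz : ∀ u : Fin 2 → ℂ,
          u 0 • ρ (hX Γ N k c i 0) + u 1 • ρ (hX Γ N k c i 1) = 0 := by
        intro u
        have hiu : IsUnit (M - 1).det := isUnit_iff_ne_zero.mpr hdet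
        have h1 := hinv ((M - 1)⁻¹.mulVec u)
        have h2 : M.mulVec ((M - 1)⁻¹.mulVec u) = (M - 1)⁻¹.mulVec u + u := by
          have h3 : (M - 1).mulVec ((M - 1)⁻¹.mulVec u) = u := by
            rw [Matrix.mulVec_mulVec, Matrix.mul_nonsing_inv _ hiu, Matrix.one_mulVec]
          rw [Matrix.sub_mulVec, Matrix.one_mulVec] at h3
          rw [add_comm]
          exact sub_eq_iff_eq_add.mp h3
        rw [h2] at h1
        simp only [Pi.add_apply, add_smul] at h1
        have h4 := sub_eq_zero.mpr h1.symm
        rw [← h4]; abel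
      intro p
      fin_cases p
      · simpa using hz ![1, 0]
      · simpa using hz ![0, 1]
    · exfalso
      push Not at htr
      have hcard : Fintype.card Γ = 1 := Fintype.card_eq_one_iff.mpr ⟨1, htr⟩
      have htrs : ∀ j, j ≠ i0 → LinearMap.trace ℂ W (ρW (Equiv.swap i0 j)) = 0 := by
        intro j hj
        have := congrArg ρ (RingQuot.mkAlgHom_rel ℂ
          (HRel.r2 (k := k) (c := c) i0 j hj.symm ![1, 0] ![0, 1]))
        simp only [map_sub, map_mul, map_smul, map_sum, hV, hRG, hSt] at this
        rw [Fintype.sum_eq_single 1 (fun γ h => absurd (htr γ) h)] at this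
        have h2 := congrArg (LinearMap.trace ℂ W) this
        rw [map_sub, LinearMap.trace_mul_comm, sub_self] at h2
        simp [omL, hk] at h2
        exact h2
      have h := congrArg (LinearMap.trace ℂ W) (hr1 i0)
      rw [map_sub, LinearMap.trace_mul_comm, sub_self, map_add, map_add, map_smul, map_sum,
        Finset.sum_eq_zero, Finset.sum_eq_zero] at h
      · simp at h
        exact (Module.finrank_pos (R := ℂ) (M := W)).ne (by exact_mod_cast h)
      · intro γ hγ
        exact absurd (htr γ) (Finset.mem_filter.mp hγ).2
      · intro j hj
        rw [map_smul, htrs j (Finset.mem_filter.mp hj).2, smul_zero]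
  refine ⟨χ, fun γ i => hRt γ i, hX0, ?_⟩
  have h := hr1 i0
  rw [hX0, hX0, mul_zero, sub_zero, ← Finset.smul_sum, smul_smul, ← Finset.sum_smul] at h
  change ∑ j ∈ Finset.univ.filter (fun j : Fin N => j ≠ i0), ρW (Equiv.swap i0 j) =
    _ • (1 : Module.End ℂ W)
  set X := ∑ j ∈ Finset.univ.filter (fun j : Fin N => j ≠ i0), ρW (Equiv.swap i0 j)
  set S := ∑ γ ∈ Finset.univ.filter (fun γ : Γ => γ ≠ 1), c γ * (χ γ : ℂ)
  have hcd : (Fintype.card Γ : ℂ) ≠ 0 := by exact_mod_cast Fintype.card_ne_zero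
  have hX : (k / 2 * (Fintype.card Γ : ℂ)) • X = (-(1 + S)) • (1 : Module.End ℂ W) := by
    rw [neg_smul, add_smul, one_smul]
    rw [eq_neg_iff_add_eq_zero, h]; abel
  have hX2 := congrArg (fun z => (2 / (k * (Fintype.card Γ : ℂ))) • z) hX
  simp only [smul_smul] at hX2
  rw [show 2 / (k * (Fintype.card Γ : ℂ)) * (k / 2 * (Fintype.card Γ : ℂ)) = 1 by field_simp,
    one_smul] at hX2
  rw [hX2]
  congr 1
  ring
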